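/- The function A satisfies lim_{y→+∞} A(y) · y³ e^{2y²/3} = −(1/(2√π)) (3/2)^{5/2}; that is, inside the droplet A(y) ∼ −(1/(2√π)) (3/2)^{5/2} e^{−2y²/3}/y³ as y → +∞. -/

import Mathlib

open MeasureTheory Real Filter

/-- The error function `erf`. -/
noncomputable def erf (x : ℝ) : ℝ := (2 / Real.sqrt Real.pi) * ∫ t in (0 : ℝ)..x, Real.exp (-t ^ 2)

/-- The complementary error function `erfc`. -/
noncomputable def erfc (x : ℝ) : ℝ := 1 - erf x

noncomputable def A₁ (y : ℝ) : ℝ :=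
  -(1 / (2 * Real.sqrt (2 * Real.pi))) *
    ∫ t in Set.Ioi (0 : ℝ), Real.exp (-2 * (t - y) ^ 2) * erfc t

noncomputable def A₂ (y : ℝ) : ℝ :=
  (1 / Real.sqrt (2 * Real.pi)) *
    ∫ t in Set.Ioi (0 : ℝ),
      Real.exp (-2 * (t - y) ^ 2) * t * (Real.exp (-t ^ 2) / Real.sqrt Real.pi - t * erfc t)

noncomputable def A₃ (y : ℝ) : ℝ :=
  (1 / 4) * (1 + erf (Real.sqrt 2 * y)) *
    (-(y * Real.exp (-2 * y ^ 2)) / Real.sqrt (2 * Real.pi) +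
      (1 / 4 + y ^ 2) * (1 - erf (Real.sqrt 2 * y)))

noncomputable def A₄ (y : ℝ) : ℝ :=
  -(1 / Real.sqrt (2 * Real.pi)) *
    ∫ t₁ in Set.Ioi (0 : ℝ), ∫ t₂ in Set.Ioo (0 : ℝ) t₁,
      (1 / (t₁ - t₂)) *
        (Real.exp (-2 * (t₁ - y) ^ 2) * (erf (t₁ - t₂) + erf (Real.sqrt 2 * (t₂ - y))) +
          Real.exp (-2 * (t₂ - y) ^ 2) * (erf (t₁ - t₂) - erf (Real.sqrt 2 * (t₁ - y))))

noncomputable def A (y : ℝ) : ℝ := A₁ y + A₂ y + A₃ y + A₄ y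


lemma erf_hasDerivAt (x : ℝ) : HasDerivAt erf (2 / √π * rexp (-x ^ 2)) x := by
  have hc : Continuous (fun t : ℝ => rexp (-t ^ 2)) := by fun_prop
  have := (hc.integral_hasStrictDerivAt 0 x).hasDerivAt
  exact this.const_mul _

lemma erf_continuous : Continuous erf :=
  continuous_iff_continuousAt.2 fun x => (erf_hasDerivAt x).continuousAt

@[fun_prop]
lemma erf_continuous_comp {X : Type*} [TopologicalSpace X] {f : X → ℝ} (hf : Continuous f) :
    Continuous (fun x => erf (f x)) := erf_continuous.comp hf

@[fun_prop]
lemma erf_measurable_comp {X : Type*} [MeasurableSpace X] {f : X → ℝ} (hf : Measurable f) :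
    Measurable (fun x => erf (f x)) := erf_continuous.measurable.comp hf

@[fun_prop]
lemma erfc_continuous_comp {X : Type*} [TopologicalSpace X] {f : X → ℝ} (hf : Continuous f) :
    Continuous (fun x => erfc (f x)) := by unfold erfc; fun_prop

@[fun_prop]
lemma erfc_measurable_comp {X : Type*} [MeasurableSpace X] {f : X → ℝ} (hf : Measurable f) :
    Measurable (fun x => erfc (f x)) := by unfold erfc; fun_prop

lemma erf_neg (x : ℝ) : erf (-x) = -erf x := by
  unfold erf
  have h := intervalIntegral.integral_comp_neg (a := (0:ℝ)) (b := x) (fun t : ℝ => rexp (-t ^ 2))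
  simp only [neg_zero, neg_sq] at h
  rw [intervalIntegral.integral_symm, ← h]
  ring

lemma erf_zero : erf 0 = 0 := by simp [erf]

lemma erf_strictMono : StrictMono erf := by
  apply strictMono_of_deriv_pos
  intro x
  rw [(erf_hasDerivAt x).deriv]
  positivity

lemma erf_tendsto : Tendsto erf atTop (nhds 1) := by
  have h1 : IntegrableOn (fun t : ℝ => rexp (-t ^ 2)) (Set.Ioi 0) := by
    have := (integrable_exp_neg_mul_sq (b := 1) one_pos).integrableOn (s := Set.Ioi 0)
    simpa using this
  have h2 := intervalIntegral_tendsto_integral_Ioi 0 h1 tendsto_id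
  have h3 := integral_gaussian_Ioi 1
  simp only [neg_mul, one_mul, div_one] at h3
  rw [h3] at h2
  have h4 := h2.const_mul (2 / √π)
  have : 2 / √π * (√π / 2) = 1 := by
    have : √π ≠ 0 := by positivity
    field_simp
  rw [this] at h4
  exact h4

lemma erf_lt_one (x : ℝ) : erf x < 1 := by
  have h : erf (x + 1) ≤ 1 := erf_strictMono.monotone.ge_of_tendsto erf_tendsto (x + 1)
  exact lt_of_lt_of_le (erf_strictMono (by linarith)) h

lemma neg_one_lt_erf (x : ℝ) : -1 < erf x := by
  have := erf_lt_one (-x)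
  rw [erf_neg] at this
  linarith

lemma erfc_pos (x : ℝ) : 0 < erfc x := by unfold erfc; linarith [erf_lt_one x]
lemma erfc_lt_two (x : ℝ) : erfc x < 2 := by unfold erfc; linarith [neg_one_lt_erf x]

lemma erfc_tendsto : Tendsto erfc atTop (nhds 0) := by
  have := (tendsto_const_nhds (x := (1:ℝ))).sub erf_tendsto
  rw [sub_self] at this
  exact this

lemma erfc_hasDerivAt (x : ℝ) : HasDerivAt erfc (-(2 / √π * rexp (-x ^ 2))) x := by
  have := (erf_hasDerivAt x).const_sub 1
  exact this

/-- a function with nonpositive derivative on `(0,∞)` tending to zero is nonnegative -/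
lemma nonneg_of_deriv_nonpos {F F' : ℝ → ℝ} (h : ∀ x, 0 < x → HasDerivAt F (F' x) x)
    (h' : ∀ x, 0 < x → F' x ≤ 0) (hl : Tendsto F atTop (nhds 0)) (x : ℝ) (hx : 0 < x) :
    0 ≤ F x := by
  have ha : AntitoneOn F (Set.Ioi 0) := by
    apply antitoneOn_of_deriv_nonpos (convex_Ioi 0)
    · intro x hx; exact (h x hx).continuousAt.continuousWithinAt
    · intro x hx; rw [interior_Ioi] at hx
      exact (h x hx).differentiableAt.differentiableWithinAt
    · intro x hx; rw [interior_Ioi] at hx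
      rw [(h x hx).deriv]; exact h' x hx
  refine le_of_tendsto hl ?_
  filter_upwards [eventually_ge_atTop x] with z hz
  exact ha hx (lt_of_lt_of_le hx hz) hz

lemma exp_neg_sq_tendsto : Tendsto (fun t : ℝ => rexp (-t ^ 2)) atTop (nhds 0) := by
  apply Real.tendsto_exp_atBot.comp
  exact tendsto_neg_atTop_atBot.comp (tendsto_pow_atTop (by norm_num))

lemma inv_pow_tendsto (n : ℕ) (hn : n ≠ 0) : Tendsto (fun t : ℝ => 1 / t ^ n) atTop (nhds 0) := by
  simp only [one_div]
  exact tendsto_inv_atTop_zero.comp (tendsto_pow_atTop (α := ℝ) hn)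

lemma pow_hasDerivAt_inv (n : ℕ) (x : ℝ) (hx : 0 < x) :
    HasDerivAt (fun t : ℝ => 1 / t ^ (n + 1)) (-(n + 1) / x ^ (n + 2)) x := by
  have h := ((hasDerivAt_pow (n + 1) x).fun_inv (by positivity))
  simp only [one_div]
  refine h.congr_deriv ?_
  rw [Nat.add_sub_cancel, div_eq_div_iff (by positivity) (by positivity)]
  push_cast
  ring

lemma expsq_hasDerivAt (x : ℝ) :
    HasDerivAt (fun t : ℝ => rexp (-t ^ 2)) (rexp (-x ^ 2) * (-(2 * x))) x := by
  have h := ((hasDerivAt_pow 2 x).neg).exp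
  simpa using h

lemma erfc_le_one_term (x : ℝ) (hx : 0 < x) :
    erfc x ≤ rexp (-x ^ 2) / √π * (1 / x ^ 1) := by
  have := nonneg_of_deriv_nonpos
    (F := fun x => rexp (-x ^ 2) / √π * (1 / x ^ 1) - erfc x)
    (fun x hx => (((expsq_hasDerivAt x).div_const _).mul (pow_hasDerivAt_inv 0 x hx)).sub
      (erfc_hasDerivAt x)) ?_ ?_ x hx
  · linarith
  · intro x hx
    have : 0 < √π := by positivity
    have e : rexp (-x ^ 2) * (-(2 * x)) / √π * (1 / x ^ (0 + 1)) +
        rexp (-x ^ 2) / √π * (-((0:ℕ) + 1) / x ^ (0 + 2)) - -(2 / √π * rexp (-x ^ 2))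
        = -(rexp (-x ^ 2) / √π * (1 / x ^ 2)) := by
      push_cast
      field_simp
      ring
    rw [e]
    have : 0 ≤ rexp (-x ^ 2) / √π * (1 / x ^ 2) := by positivity
    linarith
  · have := (((exp_neg_sq_tendsto.div_const (√π))).mul (inv_pow_tendsto 1 one_ne_zero)).sub
      erfc_tendsto
    simpa using this

lemma erfc_le_three (x : ℝ) (hx : 0 < x) :
    erfc x ≤ rexp (-x ^ 2) / √π * (1 / x ^ 1 - (1 / 2) * (1 / x ^ 3) + (3 / 4) * (1 / x ^ 5)) := by
  have := nonneg_of_deriv_nonpos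
    (F := fun x => rexp (-x ^ 2) / √π *
      (1 / x ^ 1 - (1 / 2) * (1 / x ^ 3) + (3 / 4) * (1 / x ^ 5)) - erfc x)
    (fun x hx => (((expsq_hasDerivAt x).div_const _).mul
      (((pow_hasDerivAt_inv 0 x hx).sub ((pow_hasDerivAt_inv 2 x hx).const_mul (1 / 2))).add
        ((pow_hasDerivAt_inv 4 x hx).const_mul (3 / 4)))).sub
      (erfc_hasDerivAt x)) ?_ ?_ x hx
  · linarith
  · intro x hx
    have : 0 < √π := by positivity
    have h2 : 0 ≤ rexp (-x ^ 2) / √π * (15 / 4 / x ^ 6) := by positivity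
    rw [← neg_nonneg]
    convert h2 using 1
    simp only [Pi.sub_apply, Pi.add_apply]
    push_cast
    field_simp
    ring
  · have := (((exp_neg_sq_tendsto.div_const (√π))).mul
      (((inv_pow_tendsto 1 one_ne_zero).sub ((inv_pow_tendsto 3 (by norm_num)).const_mul (1 / 2))).add
       ((inv_pow_tendsto 5 (by norm_num)).const_mul (3 / 4)))).sub
      erfc_tendsto
    simpa using this

lemma erfc_ge_four (x : ℝ) (hx : 0 < x) :
    rexp (-x ^ 2) / √π * (1 / x ^ 1 - (1 / 2) * (1 / x ^ 3) + (3 / 4) * (1 / x ^ 5)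
      - (15 / 8) * (1 / x ^ 7)) ≤ erfc x := by
  have := nonneg_of_deriv_nonpos
    (F := fun x => erfc x - rexp (-x ^ 2) / √π *
      (1 / x ^ 1 - (1 / 2) * (1 / x ^ 3) + (3 / 4) * (1 / x ^ 5) - (15 / 8) * (1 / x ^ 7)))
    (fun x hx => (erfc_hasDerivAt x).sub (((expsq_hasDerivAt x).div_const _).mul
      ((((pow_hasDerivAt_inv 0 x hx).sub ((pow_hasDerivAt_inv 2 x hx).const_mul (1 / 2))).add
        ((pow_hasDerivAt_inv 4 x hx).const_mul (3 / 4))).sub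
        ((pow_hasDerivAt_inv 6 x hx).const_mul (15 / 8))))) ?_ ?_ x hx
  · linarith
  · intro x hx
    have : 0 < √π := by positivity
    have h2 : 0 ≤ rexp (-x ^ 2) / √π * (105 / 8 / x ^ 8) := by positivity
    rw [← neg_nonneg]
    convert h2 using 1
    simp only [Pi.sub_apply, Pi.add_apply]
    push_cast
    field_simp
    ring
  · have := erfc_tendsto.sub (((exp_neg_sq_tendsto.div_const (√π))).mul
      ((((inv_pow_tendsto 1 one_ne_zero).sub ((inv_pow_tendsto 3 (by norm_num)).const_mul (1 / 2))).add
       ((inv_pow_tendsto 5 (by norm_num)).const_mul (3 / 4))).sub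
       ((inv_pow_tendsto 7 (by norm_num)).const_mul (15 / 8))))
    simpa using this

lemma erfc_le (x : ℝ) (hx : 0 ≤ x) : erfc x ≤ 3 * rexp (-x ^ 2) := by
  rcases le_or_gt x 1 with h | h
  · have h1 : erfc x ≤ 1 := by
      have := erf_strictMono.monotone hx
      rw [erf_zero] at this
      unfold erfc; linarith
    have h2 : rexp (-1) ≤ rexp (-x ^ 2) := by
      apply exp_le_exp.2; nlinarith
    have h3 : 1 ≤ 3 * rexp (-1) := by
      rw [Real.exp_neg]
      have := Real.exp_one_lt_d9
      have h0 := Real.exp_pos 1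
      rw [← div_eq_mul_inv, le_div_iff₀ h0]
      linarith
    linarith
  · have h1 := erfc_le_one_term x (by linarith)
    have h2 : 1 ≤ √π := by
      rw [Real.one_le_sqrt]; linarith [Real.pi_gt_three]
    have h3 : rexp (-x ^ 2) / √π ≤ rexp (-x ^ 2) := div_le_self (by positivity) h2
    have h4 : 1 / x ^ 1 ≤ 1 := by rw [div_le_one (by positivity)]; linarith
    have h5 : rexp (-x ^ 2) / √π * (1 / x ^ 1) ≤ rexp (-x ^ 2) * 1 := by
      apply mul_le_mul h3 h4 (by positivity) (by positivity)
    have := Real.exp_pos (-x ^ 2)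
    linarith

noncomputable def gg (u x : ℝ) : ℝ :=
  rexp (-2 * (x - u) ^ 2) * (erf u - erf (√2 * x)) +
    rexp (-2 * x ^ 2) * (erf u + erf (√2 * (x - u)))

lemma gg_measurable {X : Type*} [MeasurableSpace X] {f g : X → ℝ} (hf : Measurable f)
    (hg : Measurable g) : Measurable (fun z => gg (f z) (g z)) := by
  unfold gg; fun_prop

lemma gg_symm (u x : ℝ) : gg u (u - x) = gg u x := by
  unfold gg
  have h1 : erf (√2 * (u - x)) = - erf (√2 * (x - u)) := by
    rw [← erf_neg]; congr 1; ring
  have h2 : erf (√2 * (u - x - u)) = - erf (√2 * x) := by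
    rw [← erf_neg]; congr 1; ring
  rw [h1, h2, show (u - x - u) ^ 2 = x ^ 2 by ring, show (u - x) ^ 2 = (x - u) ^ 2 by ring]
  ring

lemma sqrt_two_mul_sq (x : ℝ) : (√2 * x) ^ 2 = 2 * x ^ 2 := by
  rw [mul_pow, Real.sq_sqrt (by norm_num)]

lemma gg_main (u x : ℝ) (hu : 0 ≤ u) (hx : 0 ≤ x) :
    |gg u x + rexp (-2 * (x - u) ^ 2) * erfc u| ≤ 9 * rexp (-x ^ 2 - 2 * u ^ 2 / 3) := by
  set E := rexp (-x ^ 2 - 2 * u ^ 2 / 3) with hE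
  have hEpos : 0 < E := Real.exp_pos _
  have e : gg u x + rexp (-2 * (x - u) ^ 2) * erfc u =
      rexp (-2 * (x - u) ^ 2) * erfc (√2 * x) + rexp (-2 * x ^ 2) * erfc (√2 * (u - x))
        - rexp (-2 * x ^ 2) * erfc u := by
    have h1 : erf (√2 * (x - u)) = - erf (√2 * (u - x)) := by
      rw [← erf_neg]; congr 1; ring
    unfold gg erfc
    rw [h1]; ring
  have t1 : rexp (-2 * (x - u) ^ 2) * erfc (√2 * x) ≤ 3 * E := by
    have := erfc_le (√2 * x) (by positivity)
    rw [sqrt_two_mul_sq] at this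
    calc _ ≤ rexp (-2 * (x - u) ^ 2) * (3 * rexp (-(2 * x ^ 2))) := by gcongr
      _ = 3 * rexp (-2 * (x - u) ^ 2 + -(2 * x ^ 2)) := by rw [Real.exp_add]; ring
      _ ≤ 3 * E := by
        rw [hE]; gcongr; nlinarith [sq_nonneg (x - 2 * u / 3)]
  have t2 : rexp (-2 * x ^ 2) * erfc (√2 * (u - x)) ≤ 3 * E := by
    rcases le_total x u with h | h
    · have := erfc_le (√2 * (u - x)) (mul_nonneg (by positivity) (by linarith))
      rw [sqrt_two_mul_sq] at this
      calc _ ≤ rexp (-2 * x ^ 2) * (3 * rexp (-(2 * (u - x) ^ 2))) := by gcongr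
        _ = 3 * rexp (-2 * x ^ 2 + -(2 * (u - x) ^ 2)) := by rw [Real.exp_add]; ring
        _ ≤ 3 * E := by
          rw [hE]; gcongr; nlinarith [sq_nonneg (x - 2 * u / 3)]
    · have := erfc_lt_two (√2 * (u - x))
      calc _ ≤ rexp (-2 * x ^ 2) * 3 := by gcongr; linarith
        _ = 3 * rexp (-2 * x ^ 2) := by ring
        _ ≤ 3 * E := by
          rw [hE]; gcongr; nlinarith
  have t3 : rexp (-2 * x ^ 2) * erfc u ≤ 3 * E := by
    have := erfc_le u hu
    calc _ ≤ rexp (-2 * x ^ 2) * (3 * rexp (-u ^ 2)) := by gcongr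
      _ = 3 * rexp (-2 * x ^ 2 + -u ^ 2) := by rw [Real.exp_add]; ring
      _ ≤ 3 * E := by
        rw [hE]; gcongr; nlinarith
  have p1 := mul_pos (Real.exp_pos (-2 * (x - u) ^ 2)) (erfc_pos (√2 * x))
  have p2 := mul_pos (Real.exp_pos (-2 * x ^ 2)) (erfc_pos (√2 * (u - x)))
  have p3 := mul_pos (Real.exp_pos (-2 * x ^ 2)) (erfc_pos u)
  rw [e, abs_le]
  constructor <;> linarith

lemma gg_bound_pos (u x : ℝ) (hu : 0 ≤ u) (hx : 0 ≤ x) :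
    |gg u x| ≤ 12 * rexp (-(x ^ 2 + u ^ 2) / 4) := by
  have h1 := gg_main u x hu hx
  have h2 : rexp (-x ^ 2 - 2 * u ^ 2 / 3) ≤ rexp (-(x ^ 2 + u ^ 2) / 4) := by
    gcongr; nlinarith
  have h3 : rexp (-2 * (x - u) ^ 2) * erfc u ≤ 3 * rexp (-(x ^ 2 + u ^ 2) / 4) := by
    have := erfc_le u hu
    calc _ ≤ rexp (-2 * (x - u) ^ 2) * (3 * rexp (-u ^ 2)) := by gcongr
      _ = 3 * rexp (-2 * (x - u) ^ 2 + -u ^ 2) := by rw [Real.exp_add]; ring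
      _ ≤ _ := by
        gcongr; nlinarith [sq_nonneg (7 * x - 8 * u)]
  have p3 := mul_pos (Real.exp_pos (-2 * (x - u) ^ 2)) (erfc_pos u)
  rw [abs_le] at h1 ⊢
  constructor <;> linarith

lemma gg_bound (u x : ℝ) (hu : 0 ≤ u) :
    |gg u x| ≤ 12 * rexp (-(x ^ 2 + u ^ 2) / 4) := by
  rcases le_total 0 x with hx | hx
  · exact gg_bound_pos u x hu hx
  · rw [← gg_symm]
    refine (gg_bound_pos u (u - x) hu (by linarith)).trans ?_
    gcongr 12 * rexp (-(?_ + u ^ 2) / 4)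
    nlinarith [mul_nonneg hu (neg_nonneg.2 hx)]

lemma gg_hasDerivAt (u x : ℝ) : HasDerivAt (fun u => gg u x)
    (rexp (-2 * (x - u) ^ 2) * (4 * (x - u)) * (erf u - erf (√2 * x)) +
      rexp (-2 * (x - u) ^ 2) * (2 / √π * rexp (-u ^ 2)) +
      rexp (-2 * x ^ 2) * (2 / √π * rexp (-u ^ 2) +
        2 / √π * rexp (-(√2 * (x - u)) ^ 2) * (√2 * (-1)))) u := by
  have h0 : HasDerivAt (fun u : ℝ => x - u) (-1) u := (hasDerivAt_id u).const_sub x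
  have h1 : HasDerivAt (fun u : ℝ => rexp (-2 * (x - u) ^ 2))
      (rexp (-2 * (x - u) ^ 2) * (4 * (x - u))) u := by
    convert ((h0.fun_pow 2).const_mul (-2)).exp using 1
    simp; ring
  have h2 : HasDerivAt (fun u : ℝ => erf (√2 * (x - u)))
      (2 / √π * rexp (-(√2 * (x - u)) ^ 2) * (√2 * (-1))) u :=
    HasDerivAt.comp (h₂ := erf) u (erf_hasDerivAt (√2 * (x - u))) (h0.const_mul √2)
  exact (h1.mul ((erf_hasDerivAt u).sub_const _)).add
    (((erf_hasDerivAt u).add h2).const_mul _)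

noncomputable def C3 : ℝ := 82 * rexp 4 + 6

lemma gg_deriv_bound (u x : ℝ) (hu : 0 ≤ u) (hu1 : u ≤ 1) :
    ‖(rexp (-2 * (x - u) ^ 2) * (4 * (x - u)) * (erf u - erf (√2 * x)) +
      rexp (-2 * (x - u) ^ 2) * (2 / √π * rexp (-u ^ 2)) +
      rexp (-2 * x ^ 2) * (2 / √π * rexp (-u ^ 2) +
        2 / √π * rexp (-(√2 * (x - u)) ^ 2) * (√2 * (-1))))‖ ≤ C3 * rexp (-x ^ 2) := by
  have hpi : 2 / √π ≤ 2 := by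
    apply div_le_self (by norm_num)
    rw [Real.one_le_sqrt]; linarith [Real.pi_gt_three]
  have hpi0 : 0 ≤ 2 / √π := by positivity
  have hs2 : √2 ≤ 2 := by
    rw [Real.sqrt_le_left (by norm_num)]; norm_num
  have hD : rexp (-(19 / 10) * (x - u) ^ 2) ≤ rexp 4 * rexp (-x ^ 2) := by
    rw [← Real.exp_add]; gcongr
    nlinarith [sq_nonneg (9 * x - 19 * u), mul_nonneg hu (sub_nonneg.2 hu1)]
  have hu2 : rexp (-u ^ 2) ≤ 1 := by rw [Real.exp_le_one_iff]; nlinarith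
  have hv2 : rexp (-(√2 * (x - u)) ^ 2) ≤ 1 := by
    rw [Real.exp_le_one_iff]; nlinarith [sq_nonneg (√2 * (x - u))]
  have hx2 : rexp (-2 * x ^ 2) ≤ rexp (-x ^ 2) := by gcongr; nlinarith [sq_nonneg x]
  have a1 : ‖rexp (-2 * (x - u) ^ 2) * (4 * (x - u)) * (erf u - erf (√2 * x))‖
      ≤ 80 * rexp (-(19 / 10) * (x - u) ^ 2) := by
    have e1 : |erf u - erf (√2 * x)| ≤ 2 := by
      rw [abs_le]
      constructor <;> linarith [erf_lt_one u, erf_lt_one (√2 * x), neg_one_lt_erf u,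
        neg_one_lt_erf (√2 * x)]
    have e2 : |x - u| ≤ 10 * rexp ((x - u) ^ 2 / 10) := by
      have := Real.add_one_le_exp ((x - u) ^ 2 / 10)
      have h3 : |x - u| ≤ 10 + |x - u| ^ 2 := by nlinarith [sq_nonneg (|x - u| - 1)]
      rw [sq_abs] at h3
      linarith
    rw [norm_mul, norm_mul, norm_mul, Real.norm_eq_abs, Real.norm_eq_abs, Real.norm_eq_abs,
      Real.norm_eq_abs, abs_of_pos (Real.exp_pos _), abs_of_pos (by norm_num : (0:ℝ) < 4)]
    calc _ ≤ rexp (-2 * (x - u) ^ 2) * (4 * (10 * rexp ((x - u) ^ 2 / 10))) * 2 := by gcongr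
      _ = 80 * rexp (-2 * (x - u) ^ 2 + (x - u) ^ 2 / 10) := by rw [Real.exp_add]; ring
      _ = _ := by congr 2; ring
  have a2 : ‖rexp (-2 * (x - u) ^ 2) * (2 / √π * rexp (-u ^ 2))‖
      ≤ 2 * rexp (-(19 / 10) * (x - u) ^ 2) := by
    rw [Real.norm_eq_abs, abs_of_nonneg (by positivity)]
    have : rexp (-2 * (x - u) ^ 2) ≤ rexp (-(19 / 10) * (x - u) ^ 2) := by
      gcongr; norm_num
    calc _ ≤ rexp (-(19 / 10) * (x - u) ^ 2) * (2 * 1) := by gcongr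
      _ = _ := by ring
  have a3 : ‖rexp (-2 * x ^ 2) * (2 / √π * rexp (-u ^ 2) +
        2 / √π * rexp (-(√2 * (x - u)) ^ 2) * (√2 * (-1)))‖ ≤ 6 * rexp (-x ^ 2) := by
    rw [norm_mul, Real.norm_eq_abs, abs_of_pos (Real.exp_pos _)]
    have b1 : 2 / √π * rexp (-u ^ 2) ≤ 2 * 1 := by gcongr
    have b2 : 2 / √π * rexp (-(√2 * (x - u)) ^ 2) * √2 ≤ 2 * 1 * 2 := by gcongr
    have b3 : 0 ≤ 2 / √π * rexp (-u ^ 2) := by positivity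
    have b4 : 0 ≤ 2 / √π * rexp (-(√2 * (x - u)) ^ 2) * √2 := by positivity
    have : ‖2 / √π * rexp (-u ^ 2) +
        2 / √π * rexp (-(√2 * (x - u)) ^ 2) * (√2 * (-1))‖ ≤ 6 := by
      rw [Real.norm_eq_abs, abs_le]; constructor <;> linarith
    calc _ ≤ rexp (-x ^ 2) * 6 := by gcongr
      _ = _ := by ring
  refine (norm_add₃_le.trans (add_le_add_three a1 a2 a3)).trans ?_
  unfold C3
  linarith

lemma gg_zero (x : ℝ) : gg 0 x = 0 := by
  simp [gg, erf_zero]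

lemma gg_small (u x : ℝ) (hu : 0 ≤ u) (hu1 : u ≤ 1) :
    |gg u x| ≤ C3 * rexp (-x ^ 2) * u := by
  have := norm_image_sub_le_of_norm_deriv_le_segment' (f := fun u => gg u x) (a := 0) (b := 1)
    (fun u _ => (gg_hasDerivAt u x).hasDerivWithinAt)
    (fun u hu => gg_deriv_bound u x hu.1 hu.2.le) u ⟨hu, hu1⟩
  simpa [gg_zero] using this

lemma C3_ge : 6 ≤ C3 := by
  unfold C3; linarith [Real.exp_pos 4]

/-- uniform bound -/
lemma gg_div_bound (u x : ℝ) (hu : 0 < u) :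
    |gg u x / u| ≤ (12 + 3 * C3) * rexp (-(x ^ 2 + u ^ 2) / 4) := by
  have hC := C3_ge
  rw [abs_div, abs_of_pos hu, div_le_iff₀ hu]
  have hE := Real.exp_pos (-(x ^ 2 + u ^ 2) / 4)
  rcases le_or_gt u 1 with h | h
  · have h1 := gg_small u x hu.le h
    have h2 : rexp (-x ^ 2) ≤ 3 * rexp (-(x ^ 2 + u ^ 2) / 4) := by
      have h3 : rexp (-x ^ 2) ≤ rexp (1 + -(x ^ 2 + u ^ 2) / 4) := by gcongr; nlinarith
      rw [Real.exp_add] at h3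
      have := Real.exp_one_lt_d9
      nlinarith
    refine h1.trans ?_
    refine mul_le_mul_of_nonneg_right ?_ hu.le
    nlinarith
  · have h1 := gg_bound u x hu.le
    have h2 : 12 * rexp (-(x ^ 2 + u ^ 2) / 4) ≤ (12 + 3 * C3) * rexp (-(x ^ 2 + u ^ 2) / 4) := by
      gcongr; linarith
    refine (h1.trans h2).trans (le_mul_of_one_le_right (by positivity) h.le)

lemma gg_div_main (u x : ℝ) (hu : 0 < u) (hx : 0 ≤ x) :
    |gg u x / u + (if 1 < u then rexp (-2 * (x - u) ^ 2) * (erfc u / u) else 0)| ≤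
      (9 + 3 * C3) * rexp (-x ^ 2) * rexp (-2 / 3 * u ^ 2) := by
  have hC := C3_ge
  split_ifs with h
  · have e : gg u x / u + rexp (-2 * (x - u) ^ 2) * (erfc u / u) =
      (gg u x + rexp (-2 * (x - u) ^ 2) * erfc u) / u := by ring
    rw [e, abs_div, abs_of_pos hu, div_le_iff₀ hu]
    refine (gg_main u x hu.le hx).trans ?_
    have e2 : rexp (-x ^ 2 - 2 * u ^ 2 / 3) = rexp (-x ^ 2) * rexp (-2 / 3 * u ^ 2) := by
      rw [← Real.exp_add]; congr 1; ring
    rw [e2, ← mul_assoc]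
    refine le_trans ?_ (le_mul_of_one_le_right (by positivity) h.le)
    gcongr; linarith
  · push Not at h
    rw [add_zero, abs_div, abs_of_pos hu, div_le_iff₀ hu]
    refine (gg_small u x hu.le h).trans ?_
    have : 1 ≤ 3 * rexp (-2 / 3 * u ^ 2) := by
      have h3 : rexp (-1) ≤ rexp (-2 / 3 * u ^ 2) := by gcongr; nlinarith
      have h4 : 1 ≤ 3 * rexp (-1) := by
        rw [Real.exp_neg]
        have := Real.exp_one_lt_d9
        have h0 := Real.exp_pos 1
        rw [← div_eq_mul_inv, le_div_iff₀ h0]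
        linarith
      linarith
    refine mul_le_mul_of_nonneg_right ?_ hu.le
    calc C3 * rexp (-x ^ 2) = C3 * rexp (-x ^ 2) * 1 := by ring
      _ ≤ C3 * rexp (-x ^ 2) * (3 * rexp (-2 / 3 * u ^ 2)) := by gcongr
      _ = 3 * C3 * rexp (-x ^ 2) * rexp (-2 / 3 * u ^ 2) := by ring
      _ ≤ _ := by gcongr; linarith

lemma gauss_int (b : ℝ) (hb : 0 < b) : Integrable (fun x : ℝ => rexp (-b * x ^ 2)) :=
  integrable_exp_neg_mul_sq hb

lemma conv_int (u : ℝ) : Integrable (fun x : ℝ => rexp (-2 * x ^ 2) * erf (√2 * (x - u))) := by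
  refine (gauss_int 2 (by norm_num)).mono' (by fun_prop) ?_
  refine ae_of_all _ fun x => ?_
  rw [norm_mul, Real.norm_eq_abs, Real.norm_eq_abs, abs_of_pos (Real.exp_pos _)]
  have : |erf (√2 * (x - u))| ≤ 1 := by
    rw [abs_le]; constructor <;> linarith [erf_lt_one (√2 * (x - u)), neg_one_lt_erf (√2 * (x - u))]
  exact mul_le_of_le_one_right (Real.exp_pos _).le this

lemma gauss_prod (u : ℝ) : ∫ x : ℝ, rexp (-2 * x ^ 2) * rexp (-(√2 * (x - u)) ^ 2) =
    rexp (-u ^ 2) * (√π / 2) := by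
  have e : ∀ x : ℝ, rexp (-2 * x ^ 2) * rexp (-(√2 * (x - u)) ^ 2) =
      rexp (-u ^ 2) * rexp (-4 * (x - u / 2) ^ 2) := by
    intro x
    rw [sqrt_two_mul_sq, ← Real.exp_add, ← Real.exp_add]; congr 1; ring
  simp_rw [e]
  rw [integral_const_mul, integral_sub_right_eq_self (fun x : ℝ => rexp (-4 * x ^ 2)) (u / 2),
    integral_gaussian]
  congr 1
  rw [Real.sqrt_div Real.pi_pos.le, show (4:ℝ) = 2 ^ 2 by norm_num, Real.sqrt_sq (by norm_num)]

lemma conv_deriv (u : ℝ) :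
    HasDerivAt (fun u : ℝ => ∫ x : ℝ, rexp (-2 * x ^ 2) * erf (√2 * (x - u)))
      (-√2 * rexp (-u ^ 2)) u := by
  have hs2 : √2 ≤ 2 := by
    rw [Real.sqrt_le_left (by norm_num)]; norm_num
  have hpi : 2 / √π ≤ 2 := by
    apply div_le_self (by norm_num)
    rw [Real.one_le_sqrt]; linarith [Real.pi_gt_three]
  have h := hasDerivAt_integral_of_dominated_loc_of_deriv_le (μ := volume) (x₀ := u)
    (s := Set.univ)
    (F := fun u x : ℝ => rexp (-2 * x ^ 2) * erf (√2 * (x - u)))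
    (F' := fun u x : ℝ => rexp (-2 * x ^ 2) * (2 / √π * rexp (-(√2 * (x - u)) ^ 2) * (√2 * (-1))))
    (bound := fun x => rexp (-2 * x ^ 2) * 4) univ_mem
    (Eventually.of_forall fun u => by fun_prop) (conv_int u) (by fun_prop)
    (ae_of_all _ fun x u _ => ?_) ((gauss_int 2 (by norm_num)).mul_const 4)
    (ae_of_all _ fun x u _ => ?_)
  · refine h.2.congr_deriv ?_
    have e : ∀ x : ℝ, rexp (-2 * x ^ 2) * (2 / √π * rexp (-(√2 * (x - u)) ^ 2) * (√2 * (-1))) =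
      (2 / √π * (√2 * (-1))) * (rexp (-2 * x ^ 2) * rexp (-(√2 * (x - u)) ^ 2)) := by
      intro x; ring
    simp_rw [e]
    rw [integral_const_mul, gauss_prod]
    have : √π ≠ 0 := by positivity
    field_simp
  · rw [norm_mul, Real.norm_eq_abs, Real.norm_eq_abs, abs_of_pos (Real.exp_pos _)]
    gcongr
    have b4 : 0 ≤ 2 / √π * rexp (-(√2 * (x - u)) ^ 2) * √2 := by positivity
    have hv2 : rexp (-(√2 * (x - u)) ^ 2) ≤ 1 := by
      rw [Real.exp_le_one_iff]; nlinarith [sq_nonneg (√2 * (x - u))]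
    have b2 : 2 / √π * rexp (-(√2 * (x - u)) ^ 2) * √2 ≤ 2 * 1 * 2 := by gcongr
    rw [abs_le]; constructor <;> linarith
  · have h0 : HasDerivAt (fun u : ℝ => x - u) (-1) u := (hasDerivAt_id u).const_sub x
    have h2 : HasDerivAt (fun u : ℝ => erf (√2 * (x - u)))
        (2 / √π * rexp (-(√2 * (x - u)) ^ 2) * (√2 * (-1))) u :=
      HasDerivAt.comp (h₂ := erf) u (erf_hasDerivAt (√2 * (x - u))) (h0.const_mul √2)
    exact h2.const_mul _

lemma conv_zero : ∫ x : ℝ, rexp (-2 * x ^ 2) * erf (√2 * (x - 0)) = 0 := by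
  have h := integral_neg_eq_self (fun x : ℝ => rexp (-2 * x ^ 2) * erf (√2 * (x - 0))) volume
  have e : ∀ x : ℝ, rexp (-2 * (-x) ^ 2) * erf (√2 * (-x - 0)) =
      -(rexp (-2 * x ^ 2) * erf (√2 * (x - 0))) := by
    intro x
    rw [show √2 * (-x - 0) = -(√2 * (x - 0)) by ring, erf_neg]
    simp
  simp_rw [e] at h
  rw [integral_neg] at h
  linarith

lemma conv_eq (u : ℝ) :
    ∫ x : ℝ, rexp (-2 * x ^ 2) * erf (√2 * (x - u)) = -(√(π / 2) * erf u) := by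
  have hd : ∀ u, HasDerivAt (fun u : ℝ => (∫ x : ℝ, rexp (-2 * x ^ 2) * erf (√2 * (x - u)))
      + √(π / 2) * erf u) 0 u := by
    intro u
    refine ((conv_deriv u).add ((erf_hasDerivAt u).const_mul √(π / 2))).congr_deriv ?_
    have h2 : √2 * √2 = 2 := Real.mul_self_sqrt (by norm_num)
    rw [Real.sqrt_div Real.pi_pos.le]
    have : √π ≠ 0 := by positivity
    field_simp
    rw [Real.sq_sqrt (by norm_num)]; ring
  have := is_const_of_deriv_eq_zero (fun u => (hd u).differentiableAt) (fun u => (hd u).deriv) u 0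
  simp only [conv_zero, erf_zero] at this
  linarith

lemma gg_integral (u : ℝ) : ∫ x : ℝ, gg u x = 0 := by
  have i1 : Integrable (fun x : ℝ => rexp (-2 * x ^ 2) * (erf u + erf (√2 * (x - u)))) := by
    have := ((gauss_int 2 (by norm_num)).mul_const (erf u)).add (conv_int u)
    refine this.congr (ae_of_all _ fun x => ?_)
    simp only [Pi.add_apply]; ring
  have e0 : ∀ x : ℝ, rexp (-2 * (x - u) ^ 2) * (erf u - erf (√2 * x)) =
      (fun x : ℝ => rexp (-2 * x ^ 2) * (erf u + erf (√2 * (x - u)))) (u - x) := by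
    intro x
    simp only
    rw [show √2 * (u - x - u) = -(√2 * x) by ring, erf_neg, show (u - x) ^ 2 = (x - u) ^ 2 by ring]
    ring
  have i2 : Integrable (fun x : ℝ => rexp (-2 * (x - u) ^ 2) * (erf u - erf (√2 * x))) := by
    simp_rw [e0]
    exact i1.comp_sub_left u
  unfold gg
  rw [integral_add i2 i1]
  simp_rw [e0]
  rw [integral_sub_left_eq_self (fun x : ℝ => rexp (-2 * x ^ 2) * (erf u + erf (√2 * (x - u))))]
  have e1 : ∫ x : ℝ, rexp (-2 * x ^ 2) * (erf u + erf (√2 * (x - u))) = 0 := by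
    simp_rw [mul_add]
    rw [integral_add ((gauss_int 2 (by norm_num)).mul_const (erf u)) (conv_int u), conv_eq,
      integral_mul_const, integral_gaussian]
    ring
  rw [e1]; simp

noncomputable def phi (u x : ℝ) : ℝ := if 0 < u then gg u x / u else 0

noncomputable def C4 : ℝ := 12 + 3 * C3

lemma C4_pos : 0 < C4 := by unfold C4; linarith [C3_ge]

lemma phi_bound (u x : ℝ) : ‖phi u x‖ ≤ C4 * rexp (-(x ^ 2 + u ^ 2) / 4) := by
  have := C4_pos
  unfold phi
  split_ifs with h
  · exact gg_div_bound u x h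
  · simp; positivity

lemma phi_measurable {X : Type*} [MeasurableSpace X] {f g : X → ℝ} (hf : Measurable f)
    (hg : Measurable g) : Measurable (fun z => phi (f z) (g z)) := by
  unfold phi
  exact Measurable.ite (measurableSet_lt measurable_const hf) ((gg_measurable hf hg).div hf)
    measurable_const

lemma gauss_prod_int (a b : ℝ) (ha : 0 < a) (y : ℝ) :
    Integrable (fun z : ℝ × ℝ => b * (rexp (-a * (z.1 - y) ^ 2) * rexp (-a * (z.2 - y) ^ 2)))
      (volume.prod volume) :=
  (((gauss_int a ha).comp_sub_right y).mul_prod ((gauss_int a ha).comp_sub_right y)).const_mul b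

lemma phi_int : Integrable (Function.uncurry fun x u : ℝ => phi u x) (volume.prod volume) := by
  refine (gauss_prod_int (1 / 4) C4 (by norm_num) 0).mono'
    (phi_measurable measurable_snd measurable_fst).aestronglyMeasurable ?_
  refine ae_of_all _ fun z => ?_
  refine (phi_bound z.2 z.1).trans (le_of_eq ?_)
  rw [← Real.exp_add]; congr 2; ring

noncomputable def KK (x : ℝ) : ℝ := ∫ u : ℝ, phi u x

lemma KK_int : Integrable KK := phi_int.integral_prod_left

lemma KK_total : ∫ x : ℝ, KK x = 0 := by
  unfold KK
  rw [integral_integral_swap phi_int]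
  have : ∀ u : ℝ, ∫ x : ℝ, phi u x = 0 := by
    intro u
    unfold phi
    split_ifs with h
    · rw [integral_div, gg_integral]; simp
    · simp
  simp_rw [this]; simp

lemma A4_int (y : ℝ) : Integrable (Function.uncurry fun t₁ t₂ : ℝ =>
    if 0 < t₂ then phi (t₁ - t₂) (y - t₂) else 0) (volume.prod volume) := by
  have := C4_pos
  refine (gauss_prod_int (1 / 16) C4 (by norm_num) y).mono' ?_ ?_
  · apply Measurable.aestronglyMeasurable
    exact Measurable.ite (measurableSet_lt measurable_const measurable_snd)
      (phi_measurable (measurable_fst.sub measurable_snd) (measurable_const.sub measurable_snd))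
      measurable_const
  · refine ae_of_all _ fun z => ?_
    simp only [Function.uncurry]
    rw [← Real.exp_add]
    split_ifs
    · refine (phi_bound _ _).trans ?_
      gcongr
      nlinarith [sq_nonneg (3 * (z.1 - y) - 4 * (z.2 - y))]
    · simp; positivity

lemma A4_eq (y : ℝ) : A₄ y = (1 / √(2 * π)) * ∫ x in Set.Ioi y, KK x := by
  have step1 : (∫ t₁ in Set.Ioi (0 : ℝ), ∫ t₂ in Set.Ioo (0 : ℝ) t₁,
      (1 / (t₁ - t₂)) *
        (Real.exp (-2 * (t₁ - y) ^ 2) * (erf (t₁ - t₂) + erf (Real.sqrt 2 * (t₂ - y))) +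
          Real.exp (-2 * (t₂ - y) ^ 2) * (erf (t₁ - t₂) - erf (Real.sqrt 2 * (t₁ - y)))))
      = ∫ t₁ : ℝ, ∫ t₂ : ℝ, if 0 < t₂ then phi (t₁ - t₂) (y - t₂) else 0 := by
    rw [← integral_indicator measurableSet_Ioi]
    congr 1; ext t₁
    have h : ∀ t₂, (if 0 < t₂ then phi (t₁ - t₂) (y - t₂) else 0) =
        (Set.Ioo (0:ℝ) t₁).indicator (fun t₂ => (1 / (t₁ - t₂)) *
        (Real.exp (-2 * (t₁ - y) ^ 2) * (erf (t₁ - t₂) + erf (Real.sqrt 2 * (t₂ - y))) +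
          Real.exp (-2 * (t₂ - y) ^ 2) * (erf (t₁ - t₂) - erf (Real.sqrt 2 * (t₁ - y))))) t₂ := by
      intro t₂
      unfold phi Set.indicator
      simp only [Set.mem_Ioo, sub_pos]
      by_cases h1 : 0 < t₂ <;> by_cases h2 : t₂ < t₁ <;> simp only [h1, h2, if_true, if_false,
        and_self, and_false, and_true]
      unfold gg
      rw [show y - t₂ - (t₁ - t₂) = -(t₁ - y) by ring, show y - t₂ = -(t₂ - y) by ring,
        mul_neg, mul_neg, erf_neg, erf_neg, neg_sq, neg_sq]
      ring
    simp_rw [h]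
    rw [integral_indicator measurableSet_Ioo]
    unfold Set.indicator
    split_ifs with h0
    · rfl
    · rw [Set.Ioo_eq_empty h0]; simp
  unfold A₄
  rw [step1, integral_integral_swap (A4_int y)]
  have step2 : ∀ t₂ : ℝ, (∫ t₁ : ℝ, if 0 < t₂ then phi (t₁ - t₂) (y - t₂) else 0) =
      (fun x => (Set.Iio y).indicator KK x) (y - t₂) := by
    intro t₂
    simp only [Set.indicator, Set.mem_Iio, sub_lt_self_iff]
    split_ifs
    · exact integral_sub_right_eq_self (fun u => phi u (y - t₂)) t₂
    · simp
  simp_rw [step2]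
  rw [integral_sub_left_eq_self (fun x => (Set.Iio y).indicator KK x),
    integral_indicator measurableSet_Iio]
  have h3 := integral_add_compl (measurableSet_Iio (a := y)) KK_int
  rw [KK_total, Set.compl_Iio, integral_Ici_eq_integral_Ioi] at h3
  rw [eq_neg_of_add_eq_zero_left h3]
  ring

lemma errZ (n : ℕ) (C : ℝ) (r : ℝ → ℝ) (hr : ∀ᶠ y in atTop, |r y| ≤ C * rexp (-y ^ 2)) :
    Tendsto (fun y => y ^ n * rexp (2 * y ^ 2 / 3) * r y) atTop (nhds 0) := by
  have h0 : Tendsto (fun y : ℝ => C * (y ^ n * rexp (-y))) atTop (nhds 0) := by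
    simpa using (Real.tendsto_pow_mul_exp_neg_atTop_nhds_zero n).const_mul C
  refine squeeze_zero_norm' ?_ h0
  filter_upwards [hr, eventually_ge_atTop 3] with y h hy
  rw [norm_mul, Real.norm_eq_abs, Real.norm_eq_abs, abs_of_nonneg (by positivity)]
  have hC : 0 ≤ C := by
    have := (abs_nonneg _).trans h
    exact nonneg_of_mul_nonneg_left this (Real.exp_pos _)
  have h2 : rexp (2 * y ^ 2 / 3) * rexp (-y ^ 2) ≤ rexp (-y) := by
    rw [← Real.exp_add]; gcongr; nlinarith
  calc _ ≤ y ^ n * rexp (2 * y ^ 2 / 3) * (C * rexp (-y ^ 2)) := by gcongr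
    _ = C * (y ^ n * (rexp (2 * y ^ 2 / 3) * rexp (-y ^ 2))) := by ring
    _ ≤ _ := by gcongr

lemma laplace (n : ℕ) (w : ℝ → ℝ) (hw : Measurable w) (C L : ℝ) (hC : 0 ≤ C)
    (hb : ∀ t, 1 < t → |t ^ n * w t| ≤ C) (hL : Tendsto (fun t => t ^ n * w t) atTop (nhds L)) :
    Tendsto (fun y : ℝ => y ^ n * rexp (2 * y ^ 2 / 3) *
      ∫ t in Set.Ioi (1:ℝ), rexp (-2 * (t - y) ^ 2) * (rexp (-t ^ 2) * w t)) atTop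
      (nhds (L * (3 / 2) ^ n * √(π / 3))) := by
  have e : ∀ y : ℝ, y ^ n * rexp (2 * y ^ 2 / 3) *
      ∫ t in Set.Ioi (1:ℝ), rexp (-2 * (t - y) ^ 2) * (rexp (-t ^ 2) * w t) =
      ∫ s : ℝ, rexp (-3 * s ^ 2) * (y ^ n * (Set.Ioi (1:ℝ)).indicator w (s + 2 * y / 3)) := by
    intro y
    rw [← integral_const_mul, ← integral_indicator measurableSet_Ioi,
      ← integral_add_right_eq_self _ (2 * y / 3)]
    congr 1; ext s
    unfold Set.indicator
    split_ifs
    · have : rexp (2 * y ^ 2 / 3) * (rexp (-2 * (s + 2 * y / 3 - y) ^ 2) *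
        rexp (-(s + 2 * y / 3) ^ 2)) = rexp (-3 * s ^ 2) := by
        rw [← Real.exp_add, ← Real.exp_add]; congr 1; ring
      rw [← this]; ring
    · simp
  simp_rw [e]
  have e2 : L * (3 / 2) ^ n * √(π / 3) = ∫ s : ℝ, rexp (-3 * s ^ 2) * (L * (3 / 2) ^ n) := by
    rw [integral_mul_const, integral_gaussian]; ring
  rw [e2]
  apply tendsto_integral_filter_of_dominated_convergence
    (fun s => rexp (-2 * s ^ 2) * (C * (3 / 2) ^ n * n.factorial * rexp 2))
  · refine Eventually.of_forall fun y => Measurable.aestronglyMeasurable ?_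
    have : Measurable fun s => (Set.Ioi (1:ℝ)).indicator w (s + 2 * y / 3) :=
      (hw.indicator measurableSet_Ioi).comp (measurable_id.add_const _)
    fun_prop
  · filter_upwards [eventually_gt_atTop 0] with y hy
    refine ae_of_all _ fun s => ?_
    unfold Set.indicator
    split_ifs with h
    · rw [Set.mem_Ioi] at h
      set t := s + 2 * y / 3 with ht
      have ht0 : 0 < t := by linarith
      have h1 : y / t ≤ 3 / 2 * (1 + |s|) := by
        rw [div_le_iff₀ ht0]
        have : -s ≤ |s| := neg_le_abs s
        have h3 : |s| ≤ |s| * t := le_mul_of_one_le_right (abs_nonneg s) h.le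
        nlinarith
      have h2 : |y ^ n * w t| ≤ C * ((3 / 2) ^ n * (1 + |s|) ^ n) := by
        have : y ^ n * w t = (y / t) ^ n * (t ^ n * w t) := by
          rw [div_pow]; field_simp
        rw [this, abs_mul, abs_of_nonneg (by positivity), mul_comm, ← mul_pow]
        have := hb t h
        gcongr
      have h3 : (1 + |s|) ^ n ≤ n.factorial * rexp (1 + |s|) := by
        have := Real.pow_div_factorial_le_exp (1 + |s|) (by positivity) n
        rw [div_le_iff₀ (by positivity)] at this
        linarith
      rw [norm_mul, Real.norm_eq_abs, Real.norm_eq_abs, abs_of_pos (Real.exp_pos _)]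
      calc _ ≤ rexp (-3 * s ^ 2) * (C * ((3 / 2) ^ n * (n.factorial * rexp (1 + |s|)))) := by
            gcongr; exact h2.trans (by gcongr)
        _ = (rexp (-3 * s ^ 2) * rexp (1 + |s|)) * (C * (3 / 2) ^ n * n.factorial) := by ring
        _ ≤ (rexp (-2 * s ^ 2) * rexp 2) * (C * (3 / 2) ^ n * n.factorial) := by
            gcongr ?_ * _
            rw [← Real.exp_add, ← Real.exp_add]
            rw [Real.exp_le_exp]
            nlinarith [sq_nonneg (|s| - 1), sq_abs s]
        _ = _ := by ring
    · simp; positivity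
  · exact (gauss_int 2 (by norm_num)).mul_const _
  · refine ae_of_all _ fun s => Tendsto.const_mul _ ?_
    have ht : Tendsto (fun y : ℝ => s + 2 * y / 3) atTop atTop := by
      apply tendsto_atTop_add_const_left
      exact (tendsto_id.const_mul_atTop (by norm_num : (0:ℝ) < 2)).atTop_div_const (by norm_num)
    have h1 := hL.comp ht
    have h2 : Tendsto (fun y : ℝ => y / (s + 2 * y / 3)) atTop (nhds (3 / 2)) := by
      have h3 : Tendsto (fun y : ℝ => 1 / (s * y⁻¹ + 2 / 3)) atTop (nhds (1 / (s * 0 + 2 / 3))) := by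
        apply Tendsto.div tendsto_const_nhds _ (by norm_num)
        exact (tendsto_inv_atTop_zero.const_mul s).add_const _
      rw [show (1:ℝ) / (s * 0 + 2 / 3) = 3 / 2 by norm_num] at h3
      refine h3.congr' ?_
      filter_upwards [eventually_gt_atTop 0] with y hy
      rw [show s + 2 * y / 3 = (s * y⁻¹ + 2 / 3) * y by field_simp, div_mul_eq_div_div_swap,
        div_self hy.ne']
    refine (h1.mul (h2.pow n)).congr' ?_
    filter_upwards [ht.eventually_gt_atTop 1] with y hy
    have : Set.indicator (Set.Ioi (1:ℝ)) w (s + 2 * y / 3) = w (s + 2 * y / 3) :=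
      Set.indicator_of_mem hy _
    rw [this, div_pow]
    simp only [Function.comp]
    have : (s + 2 * y / 3) ^ n ≠ 0 := pow_ne_zero _ (by linarith)
    generalize (s + 2 * y / 3) ^ n = X at *
    field_simp

lemma tail (K : ℝ → ℝ) (hK : Measurable K) (κ : ℝ)
    (h : Tendsto (fun x => x ^ 2 * rexp (2 * x ^ 2 / 3) * K x) atTop (nhds κ)) :
    Tendsto (fun y : ℝ => y ^ 3 * rexp (2 * y ^ 2 / 3) * ∫ x in Set.Ioi y, K x) atTop
      (nhds (3 / 4 * κ)) := by
  have e : ∀ᶠ y : ℝ in atTop, (∫ s in Set.Ioi (0:ℝ), y ^ 2 * rexp (2 * y ^ 2 / 3) * K (y + y⁻¹ * s))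
      = y ^ 3 * rexp (2 * y ^ 2 / 3) * ∫ x in Set.Ioi y, K x := by
    filter_upwards [eventually_gt_atTop 0] with y hy
    rw [integral_const_mul]
    have h1 := integral_comp_mul_left_Ioi (fun x => K (y + x)) 0 (inv_pos.2 hy)
    rw [h1, mul_zero, inv_inv, smul_eq_mul]
    have h2 : ∫ x in Set.Ioi 0, K (y + x) = ∫ x in Set.Ioi y, K x := by
      rw [← integral_indicator measurableSet_Ioi, ← integral_indicator measurableSet_Ioi,
        ← integral_add_left_eq_self ((Set.Ioi y).indicator fun x => K x) y]
      congr 1; ext x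
      simp [Set.indicator]
    rw [h2]; ring
  refine Tendsto.congr' e ?_
  have e2 : 3 / 4 * κ = ∫ s in Set.Ioi (0:ℝ), κ * rexp ((-4 / 3) * s) := by
    rw [integral_const_mul, integral_exp_mul_Ioi (by norm_num)]
    norm_num; ring
  rw [e2]
  obtain ⟨Y, hY⟩ : ∃ Y : ℝ, ∀ x ≥ Y, |x ^ 2 * rexp (2 * x ^ 2 / 3) * K x| ≤ |κ| + 1 := by
    have := (h.abs.eventually (ge_mem_nhds (lt_add_one |κ|)))
    exact eventually_atTop.1 this
  have key : ∀ y s : ℝ, 0 < y → 0 < s → y ^ 2 * rexp (2 * y ^ 2 / 3) * K (y + y⁻¹ * s) =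
      (y / (y + y⁻¹ * s)) ^ 2 * rexp (-2 / 3 * (2 * s + (y⁻¹ * s) ^ 2)) *
      ((y + y⁻¹ * s) ^ 2 * rexp (2 * (y + y⁻¹ * s) ^ 2 / 3) * K (y + y⁻¹ * s)) := by
    intro y s hy hs
    have hx : 0 < y + y⁻¹ * s := by positivity
    have h1 : rexp (2 * y ^ 2 / 3) = rexp (-2 / 3 * (2 * s + (y⁻¹ * s) ^ 2)) *
        rexp (2 * (y + y⁻¹ * s) ^ 2 / 3) := by
      rw [← Real.exp_add]; congr 1; field_simp; ring
    rw [h1, div_pow]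
    have : (y + y⁻¹ * s) ^ 2 ≠ 0 := by positivity
    generalize (y + y⁻¹ * s) ^ 2 = X at *
    field_simp
  apply tendsto_integral_filter_of_dominated_convergence (fun s => (|κ| + 1) * rexp ((-4 / 3) * s))
  · exact Eventually.of_forall fun y => by
      apply Measurable.aestronglyMeasurable
      fun_prop
  · filter_upwards [eventually_gt_atTop 0, eventually_ge_atTop Y] with y hy hyY
    filter_upwards [ae_restrict_mem measurableSet_Ioi] with s hs
    rw [Set.mem_Ioi] at hs
    have hpos : 0 < y⁻¹ * s := by positivity
    rw [key y s hy hs, norm_mul, norm_mul, Real.norm_eq_abs, Real.norm_eq_abs, Real.norm_eq_abs,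
      abs_of_pos (Real.exp_pos _), abs_of_nonneg (by positivity)]
    have h1 : (y / (y + y⁻¹ * s)) ^ 2 ≤ 1 := by
      apply pow_le_one₀ (by positivity)
      rw [div_le_one (by positivity)]; linarith
    have h2 : rexp (-2 / 3 * (2 * s + (y⁻¹ * s) ^ 2)) ≤ rexp ((-4 / 3) * s) := by
      rw [Real.exp_le_exp]; nlinarith [sq_nonneg (y⁻¹ * s)]
    have h3 := hY (y + y⁻¹ * s) (by linarith)
    calc _ ≤ 1 * rexp ((-4 / 3) * s) * (|κ| + 1) := by gcongr
      _ = _ := by ring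
  · exact (integrableOn_exp_mul_Ioi (by norm_num) 0).const_mul _
  · filter_upwards [ae_restrict_mem measurableSet_Ioi] with s hs
    rw [Set.mem_Ioi] at hs
    have hinv : Tendsto (fun y : ℝ => y⁻¹ * s) atTop (nhds 0) := by
      simpa using tendsto_inv_atTop_zero.mul_const s
    have hx : Tendsto (fun y : ℝ => y + y⁻¹ * s) atTop atTop :=
      tendsto_atTop_mono' _ (by
        filter_upwards [eventually_gt_atTop 0] with y hy
        have : 0 < y⁻¹ * s := by positivity
        show id y ≤ _
        simp only [id]; linarith) tendsto_id
    have h1 := h.comp hx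
    have h2 : Tendsto (fun y : ℝ => rexp (-2 / 3 * (2 * s + (y⁻¹ * s) ^ 2))) atTop
        (nhds (rexp ((-4 / 3) * s))) := by
      have := (((hinv.pow 2).const_add (2 * s)).const_mul (-2 / 3)).rexp
      convert this using 2
      ring_nf
    have h3 : Tendsto (fun y : ℝ => y / (y + y⁻¹ * s)) atTop (nhds 1) := by
      have h4 : Tendsto (fun y : ℝ => 1 - (y⁻¹ * s) * (y + y⁻¹ * s)⁻¹) atTop (nhds (1 - 0 * 0)) :=
        (hinv.mul (tendsto_inv_atTop_zero.comp hx)).const_sub 1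
      rw [show (1:ℝ) - 0 * 0 = 1 by norm_num] at h4
      refine h4.congr' ?_
      filter_upwards [eventually_gt_atTop 0] with y hy
      have : y + y⁻¹ * s ≠ 0 := by positivity
      rw [eq_div_iff this, sub_mul, mul_assoc, inv_mul_cancel₀ this]; ring
    have h5 := ((h3.pow 2).mul h2).mul h1
    rw [show (1:ℝ) ^ 2 * rexp ((-4 / 3) * s) * κ = κ * rexp ((-4 / 3) * s) by ring] at h5
    refine h5.congr' ?_
    filter_upwards [eventually_gt_atTop 0] with y hy
    rw [key y s hy hs]; rfl

noncomputable def w2 (t : ℝ) : ℝ := rexp (t ^ 2) * (erfc t / t)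

noncomputable def qq (t : ℝ) : ℝ :=
  -(1 / 2) * erfc t + t * (rexp (-t ^ 2) / √π - t * erfc t)

noncomputable def w3 (t : ℝ) : ℝ := rexp (t ^ 2) * qq t

lemma qq_continuous : Continuous qq := by unfold qq; fun_prop

lemma exp_exp_neg (t : ℝ) : rexp (-t ^ 2) * rexp (t ^ 2) = 1 := by
  rw [← Real.exp_add]; simp

/-- scaled complementary error function bounds -/
lemma E_le1 (t : ℝ) (ht : 0 < t) : rexp (t ^ 2) * erfc t ≤ 1 / √π * (1 / t) := by
  have h := erfc_le_one_term t ht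
  calc rexp (t ^ 2) * erfc t ≤ rexp (t ^ 2) * (rexp (-t ^ 2) / √π * (1 / t ^ 1)) := by gcongr
    _ = (rexp (-t ^ 2) * rexp (t ^ 2)) * (1 / √π * (1 / t)) := by ring
    _ = _ := by rw [exp_exp_neg]; ring

lemma E_le3 (t : ℝ) (ht : 0 < t) : rexp (t ^ 2) * erfc t ≤
    1 / √π * (1 / t ^ 1 - (1 / 2) * (1 / t ^ 3) + (3 / 4) * (1 / t ^ 5)) := by
  have h := erfc_le_three t ht
  calc rexp (t ^ 2) * erfc t ≤ rexp (t ^ 2) * (rexp (-t ^ 2) / √π *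
        (1 / t ^ 1 - (1 / 2) * (1 / t ^ 3) + (3 / 4) * (1 / t ^ 5))) := by gcongr
    _ = (rexp (-t ^ 2) * rexp (t ^ 2)) * (1 / √π *
        (1 / t ^ 1 - (1 / 2) * (1 / t ^ 3) + (3 / 4) * (1 / t ^ 5))) := by ring
    _ = _ := by rw [exp_exp_neg]; ring

lemma E_ge4 (t : ℝ) (ht : 0 < t) :
    1 / √π * (1 / t ^ 1 - (1 / 2) * (1 / t ^ 3) + (3 / 4) * (1 / t ^ 5)
      - (15 / 8) * (1 / t ^ 7)) ≤ rexp (t ^ 2) * erfc t := by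
  have h := erfc_ge_four t ht
  calc _ = (rexp (-t ^ 2) * rexp (t ^ 2)) * (1 / √π *
        (1 / t ^ 1 - (1 / 2) * (1 / t ^ 3) + (3 / 4) * (1 / t ^ 5) - (15 / 8) * (1 / t ^ 7))) := by
          rw [exp_exp_neg]; ring
    _ = rexp (t ^ 2) * (rexp (-t ^ 2) / √π *
        (1 / t ^ 1 - (1 / 2) * (1 / t ^ 3) + (3 / 4) * (1 / t ^ 5) - (15 / 8) * (1 / t ^ 7))) := by
          ring
    _ ≤ _ := by gcongr

lemma inv_sqrt_pi_le : 1 / √π ≤ 1 := by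
  apply div_le_self (by norm_num)
  rw [Real.one_le_sqrt]; linarith [Real.pi_gt_three]

lemma w2_le (t : ℝ) (ht : 0 < t) : t ^ 2 * w2 t ≤ 1 / √π := by
  have h := mul_le_mul_of_nonneg_left (E_le1 t ht) ht.le
  calc t ^ 2 * w2 t = t * (rexp (t ^ 2) * erfc t) := by unfold w2; field_simp
    _ ≤ _ := h
    _ = _ := by field_simp

lemma w2_ge (t : ℝ) (ht : 0 < t) :
    1 / √π * (1 - (1 / 2) * (1 / t ^ 2) + (3 / 4) * (1 / t ^ 4) - (15 / 8) * (1 / t ^ 6)) ≤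
      t ^ 2 * w2 t := by
  have h := mul_le_mul_of_nonneg_left (E_ge4 t ht) ht.le
  calc _ = _ := by field_simp
    _ ≤ _ := h
    _ = t ^ 2 * w2 t := by unfold w2; field_simp

lemma w2_lim : Tendsto (fun t => t ^ 2 * w2 t) atTop (nhds (1 / √π)) := by
  have hl : Tendsto (fun t : ℝ => 1 / √π * (1 - (1 / 2) * (1 / t ^ 2) + (3 / 4) * (1 / t ^ 4)
      - (15 / 8) * (1 / t ^ 6))) atTop (nhds (1 / √π)) := by
    have := (((((inv_pow_tendsto 2 (by norm_num)).const_mul (1 / 2)).const_sub 1).add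
      ((inv_pow_tendsto 4 (by norm_num)).const_mul (3 / 4))).sub
      ((inv_pow_tendsto 6 (by norm_num)).const_mul (15 / 8))).const_mul (1 / √π)
    simpa using this
  refine tendsto_of_tendsto_of_tendsto_of_le_of_le' hl tendsto_const_nhds ?_ ?_
  · filter_upwards [eventually_gt_atTop 0] with t ht using w2_ge t ht
  · filter_upwards [eventually_gt_atTop 0] with t ht using w2_le t ht

lemma w3_eq (t : ℝ) : t ^ 3 * w3 t = 1 / √π * t ^ 4 -
    (t ^ 3 / 2 + t ^ 5) * (rexp (t ^ 2) * erfc t) := by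
  unfold w3 qq
  have : t ^ 3 * (rexp (t ^ 2) * (-(1 / 2) * erfc t + t * (rexp (-t ^ 2) / √π - t * erfc t))) =
    t ^ 4 * (1 / √π) * (rexp (-t ^ 2) * rexp (t ^ 2)) -
    (t ^ 3 / 2 + t ^ 5) * (rexp (t ^ 2) * erfc t) := by ring
  rw [this, exp_exp_neg]; ring

lemma w3_ge (t : ℝ) (ht : 0 < t) :
    1 / √π * (-(1 / 2) - 3 / 8 * (1 / t ^ 2)) ≤ t ^ 3 * w3 t := by
  rw [w3_eq]
  have h := mul_le_mul_of_nonneg_left (E_le3 t ht) (by positivity : 0 ≤ t ^ 3 / 2 + t ^ 5)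
  refine le_trans (le_of_eq ?_) (sub_le_sub_left h _)
  field_simp; ring

lemma w3_le (t : ℝ) (ht : 0 < t) :
    t ^ 3 * w3 t ≤ 1 / √π * (-(1 / 2) + 3 / 2 * (1 / t ^ 2) + 15 / 16 * (1 / t ^ 4)) := by
  rw [w3_eq]
  have h := mul_le_mul_of_nonneg_left (E_ge4 t ht) (by positivity : 0 ≤ t ^ 3 / 2 + t ^ 5)
  refine le_trans (sub_le_sub_left h _) (le_of_eq ?_)
  field_simp; ring

lemma w3_lim : Tendsto (fun t => t ^ 3 * w3 t) atTop (nhds (1 / √π * (-(1 / 2)))) := by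
  have hl : Tendsto (fun t : ℝ => 1 / √π * (-(1 / 2) - 3 / 8 * (1 / t ^ 2))) atTop
      (nhds (1 / √π * (-(1 / 2)))) := by
    have := (((inv_pow_tendsto 2 (by norm_num)).const_mul (3 / 8)).const_sub (-(1 / 2))).const_mul
      (1 / √π)
    simpa only [mul_zero, sub_zero] using this
  have hu : Tendsto (fun t : ℝ => 1 / √π * (-(1 / 2) + 3 / 2 * (1 / t ^ 2) + 15 / 16 * (1 / t ^ 4)))
      atTop (nhds (1 / √π * (-(1 / 2)))) := by
    have := ((((inv_pow_tendsto 2 (by norm_num)).const_mul (3 / 2)).const_add (-(1 / 2))).add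
      ((inv_pow_tendsto 4 (by norm_num)).const_mul (15 / 16))).const_mul (1 / √π)
    simpa only [mul_zero, add_zero] using this
  refine tendsto_of_tendsto_of_tendsto_of_le_of_le' hl hu ?_ ?_
  · filter_upwards [eventually_gt_atTop 0] with t ht using w3_ge t ht
  · filter_upwards [eventually_gt_atTop 0] with t ht using w3_le t ht

lemma inv_pow_le_one (t : ℝ) (ht : 1 < t) (n : ℕ) : 1 / t ^ n ≤ 1 := by
  rw [div_le_one (by positivity)]; exact one_le_pow₀ ht.le

lemma w2_bound (t : ℝ) (ht : 1 < t) : |t ^ 2 * w2 t| ≤ 1 := by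
  have ht0 : 0 < t := by linarith
  have h0 : 0 ≤ t ^ 2 * w2 t := by
    unfold w2
    have := erfc_pos t
    positivity
  rw [abs_of_nonneg h0]
  exact (w2_le t ht0).trans inv_sqrt_pi_le

lemma w3_bound (t : ℝ) (ht : 1 < t) : |t ^ 3 * w3 t| ≤ 2 := by
  have ht0 : 0 < t := by linarith
  have h1 := w3_ge t ht0
  have h2 := w3_le t ht0
  have h3 := inv_pow_le_one t ht 2
  have h4 := inv_pow_le_one t ht 4
  have h5 : 0 ≤ 1 / √π := by positivity
  have h6 := inv_sqrt_pi_le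
  rw [abs_le]
  constructor
  · refine le_trans ?_ h1
    nlinarith
  · refine h2.trans ?_
    nlinarith

lemma lap2 : Tendsto (fun x : ℝ => x ^ 2 * rexp (2 * x ^ 2 / 3) *
      ∫ t in Set.Ioi (1:ℝ), rexp (-2 * (x - t) ^ 2) * (erfc t / t)) atTop
      (nhds (1 / √π * (3 / 2) ^ 2 * √(π / 3))) := by
  have h := laplace 2 w2 (by unfold w2; fun_prop) 1 _ zero_le_one w2_bound w2_lim
  refine h.congr fun x => ?_
  congr 1
  refine integral_congr_ae (ae_of_all _ fun t => ?_)
  simp only [w2]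
  rw [← mul_assoc (rexp (-t ^ 2)), exp_exp_neg, one_mul, show (x - t) ^ 2 = (t - x) ^ 2 by ring]

lemma lap3 : Tendsto (fun y : ℝ => y ^ 3 * rexp (2 * y ^ 2 / 3) *
      ∫ t in Set.Ioi (1:ℝ), rexp (-2 * (t - y) ^ 2) * qq t) atTop
      (nhds (1 / √π * (-(1 / 2)) * (3 / 2) ^ 3 * √(π / 3))) := by
  have h := laplace 3 w3 (by have := qq_continuous.measurable; unfold w3; fun_prop) 2 _
    zero_le_two w3_bound w3_lim
  refine h.congr fun x => ?_
  congr 1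
  refine integral_congr_ae (ae_of_all _ fun t => ?_)
  simp only [w3]
  rw [← mul_assoc (rexp (-t ^ 2)), exp_exp_neg, one_mul]

lemma KK_measurable : Measurable KK := by
  have : StronglyMeasurable (Function.uncurry fun x u : ℝ => phi u x) :=
    (phi_measurable measurable_snd measurable_fst).stronglyMeasurable
  exact this.integral_prod_right.measurable

lemma KK_rem : ∃ C : ℝ, ∀ x : ℝ, 0 ≤ x →
    |KK x + ∫ t in Set.Ioi (1:ℝ), rexp (-2 * (x - t) ^ 2) * (erfc t / t)| ≤ C * rexp (-x ^ 2) := by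
  have hC := C3_ge
  refine ⟨∫ u : ℝ, (9 + 3 * C3) * rexp (-(2 / 3) * u ^ 2), fun x hx => ?_⟩
  have i1 : Integrable (fun u => phi u x) := by
    refine ((gauss_int (1 / 4) (by norm_num)).const_mul C4).mono'
      (phi_measurable measurable_id measurable_const).aestronglyMeasurable
      (ae_of_all _ fun u => (phi_bound u x).trans ?_)
    have := C4_pos
    gcongr
    nlinarith [sq_nonneg x]
  have i2 : Integrable ((Set.Ioi (1:ℝ)).indicator
      fun t => rexp (-2 * (x - t) ^ 2) * (erfc t / t)) := by
    refine (((gauss_int 2 (by norm_num)).comp_sub_left x).const_mul 2).mono'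
      (Measurable.aestronglyMeasurable (Measurable.indicator (by fun_prop) measurableSet_Ioi))
      (ae_of_all _ fun u => ?_)
    unfold Set.indicator
    split_ifs with h
    · rw [Set.mem_Ioi] at h
      have h0 : 0 < u := by linarith
      have h1 := erfc_pos u
      have h2 := erfc_lt_two u
      rw [Real.norm_eq_abs, abs_of_nonneg (by positivity), mul_comm]
      show rexp (-2 * (x - u) ^ 2) * (erfc u / u) ≤ rexp (-2 * (x - u) ^ 2) * 2
      refine mul_le_mul_of_nonneg_left ?_ (Real.exp_pos _).le
      rw [div_le_iff₀ h0]; linarith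
    · simp; positivity
  rw [← integral_indicator measurableSet_Ioi]
  unfold KK
  rw [← integral_add i1 i2, ← integral_mul_const, ← Real.norm_eq_abs]
  refine norm_integral_le_of_norm_le
    (((gauss_int (2 / 3) (by norm_num)).const_mul (9 + 3 * C3)).mul_const (rexp (-x ^ 2)))
    (ae_of_all _ fun u => ?_)
  rcases le_or_gt u 0 with h | h
  · have : u ∉ Set.Ioi (1:ℝ) := by simp; linarith
    rw [Set.indicator_of_notMem this]
    simp only [phi, not_lt.2 h, if_false, add_zero, norm_zero]
    positivity
  · have := gg_div_main u x h hx
    simp only [phi, h, if_true, Set.indicator, Set.mem_Ioi]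
    rw [Real.norm_eq_abs]
    refine this.trans (le_of_eq ?_)
    rw [show (-2 / 3 : ℝ) = -(2 / 3) by norm_num]
    ring

lemma KK_lim : Tendsto (fun x => x ^ 2 * rexp (2 * x ^ 2 / 3) * KK x) atTop
    (nhds (-(1 / √π * (3 / 2) ^ 2 * √(π / 3)))) := by
  obtain ⟨C, hC⟩ := KK_rem
  have h1 := errZ 2 C
    (fun x => KK x + ∫ t in Set.Ioi (1:ℝ), rexp (-2 * (x - t) ^ 2) * (erfc t / t))
    (by filter_upwards [eventually_ge_atTop 0] with x hx using hC x hx)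
  have h2 := h1.sub lap2
  rw [zero_sub] at h2
  refine h2.congr fun x => ?_
  ring

lemma A4_lim : Tendsto (fun y => y ^ 3 * rexp (2 * y ^ 2 / 3) * A₄ y) atTop
    (nhds (1 / √(2 * π) * (3 / 4 * (-(1 / √π * (3 / 2) ^ 2 * √(π / 3)))))) := by
  refine ((tail KK KK_measurable _ KK_lim).const_mul (1 / √(2 * π))).congr fun y => ?_
  rw [A4_eq]; ring

lemma A3_lim : Tendsto (fun y => y ^ 3 * rexp (2 * y ^ 2 / 3) * A₃ y) atTop (nhds 0) := by
  apply errZ 3 6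
  filter_upwards [eventually_ge_atTop 0] with y hy
  have h1 := erf_lt_one (√2 * y)
  have h2 := neg_one_lt_erf (√2 * y)
  have h3 := erfc_le (√2 * y) (by positivity)
  rw [sqrt_two_mul_sq] at h3
  have h3p := erfc_pos (√2 * y)
  unfold erfc at h3 h3p
  have h4 : 1 ≤ √(2 * π) := by
    rw [Real.one_le_sqrt]; linarith [Real.pi_gt_three]
  have h5 : rexp (-2 * y ^ 2) = rexp (-(2 * y ^ 2)) := by congr 1; ring
  have h6 : y * rexp (-2 * y ^ 2) / √(2 * π) ≤ y * rexp (-(2 * y ^ 2)) := by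
    rw [h5]; exact div_le_self (by positivity) h4
  have h6' : 0 ≤ y * rexp (-2 * y ^ 2) / √(2 * π) := by positivity
  have h7 : (1 / 4 + y ^ 2) * (1 - erf (√2 * y)) ≤ (1 / 4 + y ^ 2) * (3 * rexp (-(2 * y ^ 2))) := by
    gcongr
  have h7' : 0 ≤ (1 / 4 + y ^ 2) * (1 - erf (√2 * y)) := by positivity
  have h8 : rexp (-(2 * y ^ 2)) * (1 + y ^ 2) ≤ rexp (-y ^ 2) := by
    have := Real.add_one_le_exp (y ^ 2)
    calc rexp (-(2 * y ^ 2)) * (1 + y ^ 2) ≤ rexp (-(2 * y ^ 2)) * rexp (y ^ 2) := by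
          gcongr; linarith
      _ = _ := by rw [← Real.exp_add]; congr 1; ring
  have hE := Real.exp_pos (-(2 * y ^ 2))
  have h9 : |-(y * rexp (-2 * y ^ 2)) / √(2 * π) + (1 / 4 + y ^ 2) * (1 - erf (√2 * y))| ≤
      12 * rexp (-y ^ 2) := by
    rw [neg_div, abs_le]
    constructor
    · nlinarith [mul_nonneg hE.le (sq_nonneg (y - 1))]
    · nlinarith [mul_nonneg hE.le (sq_nonneg (y - 1))]
  have h10 : |1 / 4 * (1 + erf (√2 * y))| ≤ 1 / 2 := by
    rw [abs_le]; constructor <;> linarith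
  unfold A₃
  rw [abs_mul]
  calc _ ≤ 1 / 2 * (12 * rexp (-y ^ 2)) := by gcongr
    _ = _ := by ring

lemma qq_bound (t : ℝ) (ht : 0 ≤ t) (ht1 : t ≤ 1) : |qq t| ≤ 4 := by
  have h1 := erfc_pos t
  have h2 := erfc_lt_two t
  have h3 : rexp (-t ^ 2) / √π ≤ 1 := by
    have h : rexp (-t ^ 2) ≤ 1 := by rw [Real.exp_le_one_iff]; nlinarith
    rw [div_le_one (by positivity)]
    refine h.trans ?_
    rw [Real.one_le_sqrt]; linarith [Real.pi_gt_three]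
  have h4 : 0 ≤ rexp (-t ^ 2) / √π := by positivity
  have h5 : t * erfc t ≤ 2 := by nlinarith
  have h6 : 0 ≤ t * erfc t := by positivity
  unfold qq
  have h7 : |t * (rexp (-t ^ 2) / √π - t * erfc t)| ≤ 1 * 2 := by
    rw [abs_mul, abs_of_nonneg ht]
    gcongr
    rw [abs_le]; constructor <;> linarith
  rw [abs_le] at h7 ⊢
  constructor <;> linarith

lemma gs_int (y : ℝ) : Integrable (fun t : ℝ => rexp (-2 * (t - y) ^ 2)) :=
  (gauss_int 2 (by norm_num)).comp_sub_right y

lemma A12_eq (y : ℝ) : A₁ y + A₂ y = 1 / √(2 * π) *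
    ((∫ t in Set.Ioc (0:ℝ) 1, rexp (-2 * (t - y) ^ 2) * qq t) +
      ∫ t in Set.Ioi (1:ℝ), rexp (-2 * (t - y) ^ 2) * qq t) := by
  have i1 : IntegrableOn (fun t : ℝ => rexp (-2 * (t - y) ^ 2) * erfc t) (Set.Ioi 0) := by
    refine Integrable.integrableOn ?_
    refine ((gs_int y).mul_const 2).mono' (by fun_prop) (ae_of_all _ fun t => ?_)
    have h1 := erfc_pos t
    have h2 := erfc_lt_two t
    rw [Real.norm_eq_abs, abs_of_pos (by positivity)]
    gcongr
  have i2 : IntegrableOn (fun t : ℝ => rexp (-2 * (t - y) ^ 2) * t *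
      (rexp (-t ^ 2) / √π - t * erfc t)) (Set.Ioi 0) := by
    refine Integrable.mono' (((gs_int y).mul_const 4).integrableOn) (by fun_prop) ?_
    filter_upwards [ae_restrict_mem measurableSet_Ioi] with t ht
    rw [Set.mem_Ioi] at ht
    have h1 := erfc_pos t
    have hpi := inv_sqrt_pi_le
    have h3 : 0 ≤ t * (rexp (-t ^ 2) / √π - t * erfc t) := by
      have := erfc_le_one_term t ht
      have h : t * erfc t ≤ rexp (-t ^ 2) / √π := by
        calc t * erfc t ≤ t * (rexp (-t ^ 2) / √π * (1 / t ^ 1)) := by gcongr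
          _ = _ := by field_simp
      exact mul_nonneg ht.le (by linarith)
    have h4 : t * (rexp (-t ^ 2) / √π - t * erfc t) ≤ 4 := by
      have h5 : t * rexp (-t ^ 2) ≤ 1 := by
        have := Real.add_one_le_exp (t ^ 2)
        have h6 : t ≤ rexp (t ^ 2) := by nlinarith [sq_nonneg (t - 1)]
        calc t * rexp (-t ^ 2) ≤ rexp (t ^ 2) * rexp (-t ^ 2) := by gcongr
          _ = 1 := by rw [mul_comm, exp_exp_neg]
      have h7 : t * rexp (-t ^ 2) * (1 / √π) ≤ 1 * 1 := by gcongr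
      have h8 : 0 ≤ t * (t * erfc t) := by positivity
      have e : t * (rexp (-t ^ 2) / √π - t * erfc t) = t * rexp (-t ^ 2) * (1 / √π)
        - t * (t * erfc t) := by ring
      linarith
    rw [mul_assoc, norm_mul, Real.norm_eq_abs, Real.norm_eq_abs, abs_of_pos (Real.exp_pos _),
      abs_of_nonneg h3]
    gcongr
  have e : ∀ t : ℝ, rexp (-2 * (t - y) ^ 2) * qq t = -(1 / 2) * (rexp (-2 * (t - y) ^ 2) * erfc t) +
      rexp (-2 * (t - y) ^ 2) * t * (rexp (-t ^ 2) / √π - t * erfc t) := by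
    intro t; unfold qq; ring
  have i3 : IntegrableOn (fun t : ℝ => rexp (-2 * (t - y) ^ 2) * qq t) (Set.Ioi 0) := by
    simp_rw [e]
    exact (i1.const_mul _).add i2
  rw [← setIntegral_union Set.Ioc_disjoint_Ioi_same measurableSet_Ioi
    (i3.mono_set Set.Ioc_subset_Ioi_self) (i3.mono_set (Set.Ioi_subset_Ioi zero_le_one)),
    Set.Ioc_union_Ioi_eq_Ioi zero_le_one]
  simp_rw [e]
  rw [integral_add (i1.const_mul _) i2, integral_const_mul]
  unfold A₁ A₂
  ring

lemma small_lim : Tendsto (fun y => y ^ 3 * rexp (2 * y ^ 2 / 3) *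
    ∫ t in Set.Ioc (0:ℝ) 1, rexp (-2 * (t - y) ^ 2) * qq t) atTop (nhds 0) := by
  apply errZ 3 (rexp 2 * 4)
  filter_upwards [eventually_ge_atTop 1] with y hy
  have := norm_setIntegral_le_of_norm_le_const (μ := volume) (s := Set.Ioc (0:ℝ) 1)
    (f := fun t => rexp (-2 * (t - y) ^ 2) * qq t) (C := rexp 2 * 4 * rexp (-y ^ 2)) (by simp) ?_
  · simpa using this
  · intro t ht
    have h1 := qq_bound t ht.1.le ht.2
    rw [norm_mul, Real.norm_eq_abs, Real.norm_eq_abs, abs_of_pos (Real.exp_pos _)]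
    have h2 : rexp (-2 * (t - y) ^ 2) ≤ rexp 2 * rexp (-y ^ 2) := by
      rw [← Real.exp_add, Real.exp_le_exp]
      nlinarith [sq_nonneg (y - 2), mul_nonneg (sub_nonneg.2 ht.2) (sub_nonneg.2 hy), sq_nonneg (1 - t)]
    calc _ ≤ (rexp 2 * rexp (-y ^ 2)) * 4 := by gcongr
      _ = _ := by ring

lemma A12_lim : Tendsto (fun y => y ^ 3 * rexp (2 * y ^ 2 / 3) * (A₁ y + A₂ y)) atTop
    (nhds (1 / √(2 * π) * (0 + 1 / √π * (-(1 / 2)) * (3 / 2) ^ 3 * √(π / 3)))) := by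
  refine ((small_lim.add lap3).const_mul (1 / √(2 * π))).congr fun y => ?_
  rw [A12_eq]; ring

/-- Inside the droplet, `A(y) ∼ −(1/(2√π)) (3/2)^{5/2} e^{−2y²/3}/y³` as `y → +∞`. -/
theorem A_asymptotics_inside :
    Tendsto (fun y : ℝ => A y * y ^ 3 * Real.exp (2 * y ^ 2 / 3))
      atTop (nhds (-(1 / (2 * Real.sqrt Real.pi)) * ((3 : ℝ) / 2) ^ ((5 : ℝ) / 2))) := by
  have h := (A12_lim.add A3_lim).add A4_lim
  have e : (1 / √(2 * π) * (0 + 1 / √π * (-(1 / 2)) * (3 / 2) ^ 3 * √(π / 3))) + 0 +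
      1 / √(2 * π) * (3 / 4 * (-(1 / √π * (3 / 2) ^ 2 * √(π / 3)))) =
      -(1 / (2 * Real.sqrt Real.pi)) * ((3 : ℝ) / 2) ^ ((5 : ℝ) / 2) := by
    have h1 : ((3 : ℝ) / 2) ^ ((5 : ℝ) / 2) = (9 / 4) * (√3 / √2) := by
      rw [show (5 : ℝ) / 2 = 2 + 1 / 2 by norm_num, Real.rpow_add (by norm_num),
        ← Real.sqrt_eq_rpow, Real.sqrt_div (by norm_num), Real.rpow_two]
      norm_num
    rw [h1, Real.sqrt_mul (by norm_num), Real.sqrt_div Real.pi_pos.le]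
    have h2 : √3 ^ 2 = 3 := Real.sq_sqrt (by norm_num)
    have : √π ≠ 0 := by positivity
    field_simp
    rw [h2]
    norm_num
  rw [e] at h
  refine h.congr fun y => ?_
  unfold A
  ring
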